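/- Fix integers ℓ≥1 and n≥0. The statistic fmaf is Mahonian on G_{ℓ,n}: Σ_{σ ∈ G_{ℓ,n}} q^{fmaf σ} = [ℓ]_q [2ℓ]_q ⋯ [nℓ]_q as polynomials in q. -/

import Mathlib

/-!
The proof compares `fmaf` with the flag major index `fmaj = ℓ · maj + col`.

*`fmaj` is Mahonian.* An element of `G_{ℓ,n+1}` is determined by its last letter and the
standardization `π ∈ G_{ℓ,n}` of the remaining word. If exactly `r` letters of `Σ_{ℓ,n+1}` are
larger than the last letter, the elements with this last letter contribute `q^r [ℓ]_q ⋯ [nℓ]_q`, and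
summing over `r` gives the product formula. The contribution is computed by induction: the rank of
the last letter of `π` runs over `0, …, N - 1` with `N = nℓ`, and it creates a descent, hence an
extra factor `q^N`, exactly when it is below a threshold `t`; this rotates the exponents to
`t, …, t + N - 1`.

*`fmaf` and `fmaj` are equidistributed.* A colored permutation is the same as the set `S` of its
nonfixed places together with its derangement part `τ`. For fixed `τ` of size `m` the statistic
`col` is constant, and with `Q = q^ℓ` the sums over `S` of `Q^maf` and of `Q^maj` both equal
`Q^(maj τ)` times the `Q`-binomial coefficient of `n` and `m`. For `maf` this counts `0`-`1` words
by inversions. For `maj`, a letter of `τ` next to a fixed point is larger than it if it is an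
excedance, and smaller otherwise. So the descents are those of a shuffle of `τ` with copies of a
single letter, and the sum is evaluated by induction on the length, refined by the origin of the
last letter, from the two Pascal recursions.
-/

open Finset

/-- A colored permutation in `G_{ℓ,n} ≅ C_ℓ ≀ S_n`: an underlying permutation of `Fin n`
together with a color (exponent of `ζ`) attached to each position. The letter at (0-based)
position `i` of the word of `σ` is `ζ^(σ.2 i) · (σ.1 i + 1)` (1-based value `σ.1 i + 1`). -/
abbrev CP (ℓ n : ℕ) := Equiv.Perm (Fin n) × (Fin n → Fin ℓ)

namespace CP

variable {ℓ n : ℕ}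

/-- `gtLetter a b` : the letter `a = (colorIndex, value)` is greater than `b` in the order
`1 > ζ > ⋯ > ζ^{ℓ-1}` on colors, colors compared first. -/
def gtLetter (a b : ℕ × ℕ) : Prop := a.1 < b.1 ∨ (a.1 = b.1 ∧ b.2 < a.2)

instance (a b : ℕ × ℕ) : Decidable (gtLetter a b) := by unfold gtLetter; infer_instance

/-- The letter (color index, 0-based absolute value) at 0-based position `i`. -/
def letter (σ : CP ℓ n) (i : ℕ) : ℕ × ℕ :=
  if h : i < n then ((σ.2 ⟨i, h⟩ : ℕ), (σ.1 ⟨i, h⟩ : ℕ)) else (0, 0)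

/-- 0-based descent positions : `i < n-1` such that `x_{i+1} > x_{i+2}` (1-based positions). -/
def desSet (σ : CP ℓ n) : Finset ℕ :=
  (range (n - 1)).filter fun i => gtLetter (letter σ i) (letter σ (i + 1))

/-- Major index: sum of the (1-based) descent places. -/
def maj (σ : CP ℓ n) : ℕ := ∑ i ∈ desSet σ, (i + 1)

/-- Number of descents. -/
def des (σ : CP ℓ n) : ℕ := (desSet σ).card

/-- `col σ = Σ_j j·#{i : ε_{x_i} = ζ^j}`. -/
def col (σ : CP ℓ n) : ℕ := ∑ i, (σ.2 i : ℕ)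

/-- flag major index. -/
def fmaj (σ : CP ℓ n) : ℕ := ℓ * maj σ + col σ

/-- The set of fixed points (position fixed and color `ζ^0 = 1`). -/
def fixSet (σ : CP ℓ n) : Finset (Fin n) :=
  univ.filter fun i => σ.1 i = i ∧ (σ.2 i : ℕ) = 0

def fix (σ : CP ℓ n) : ℕ := (fixSet σ).card

/-- Number of excedances `x_i > i`. -/
def exc (σ : CP ℓ n) : ℕ :=
  (univ.filter fun i : Fin n => (σ.2 i : ℕ) = 0 ∧ (i : ℕ) < (σ.1 i : ℕ)).card

lemma card_nonfix (σ : CP ℓ n) : ((fixSet σ)ᶜ).card = n - fix σ := by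
  rw [Finset.card_compl, fix, Fintype.card_fin]

lemma card_vals (σ : CP ℓ n) : (((fixSet σ)ᶜ).image σ.1).card = n - fix σ := by
  rw [Finset.card_image_of_injective _ σ.1.injective, card_nonfix]

/-- The bijection from nonfixed positions to the set of their values. -/
def derMid (σ : CP ℓ n) :
    {x // x ∈ ((fixSet σ)ᶜ : Finset (Fin n))} ≃ {x // x ∈ ((fixSet σ)ᶜ).image σ.1} where
  toFun p := ⟨σ.1 p.1, Finset.mem_image_of_mem _ p.2⟩
  invFun v := ⟨σ.1.symm v.1, by
    obtain ⟨p, hp, hpv⟩ := Finset.mem_image.mp v.2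
    simpa [← hpv] using hp⟩
  left_inv p := by simp
  right_inv v := by simp

/-- The derangement part `Der σ`: delete the fixed points of the word of `σ`, replace each
absolute value by its rank among the remaining values, and keep the colors. -/
def Der (σ : CP ℓ n) : CP ℓ (n - fix σ) :=
  let eP := ((fixSet σ)ᶜ).orderIsoOfFin (card_nonfix σ)
  let eV := (((fixSet σ)ᶜ).image σ.1).orderIsoOfFin (card_vals σ)
  (eP.toEquiv.trans ((derMid σ).trans eV.toEquiv.symm), fun i => σ.2 (eP i))

/-- `maf σ = maj (Der σ) + Σ_{j=1}^k (i_j − j)` over the (1-based) fixed points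
`i_1 < ⋯ < i_k`; with 0-based fixed positions this is `Σ f − k(k−1)/2`. -/
def maf (σ : CP ℓ n) : ℕ := maj (Der σ) + ((∑ i ∈ fixSet σ, (i : ℕ)) - (fix σ).choose 2)

/-- flag maf. -/
def fmaf (σ : CP ℓ n) : ℕ := ℓ * maf σ + col σ

end CP

/-- The q-integer `[k]_q = 1 + q + ⋯ + q^{k-1}`. -/
def qint {R : Type*} [CommSemiring R] (q : R) (k : ℕ) : R := ∑ i ∈ range k, q ^ i

/-! ### `q`-binomial coefficients -/

/-- The `q`-binomial coefficient, as a polynomial expression in `q`; it is defined by a Pascal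
recursion so that it makes sense in a commutative semiring. -/
def qBinom {R : Type*} [CommSemiring R] (q : R) : ℕ → ℕ → R
  | _, 0 => 1
  | 0, _ + 1 => 0
  | n + 1, m + 1 => qBinom q n m + q ^ (m + 1) * qBinom q n (m + 1)

section QBinom

variable {R : Type*} [CommSemiring R] (q : R)

@[simp]
lemma qBinom_zero_right (n : ℕ) : qBinom q n 0 = 1 := by cases n <;> rfl

@[simp]
lemma qBinom_zero_succ (m : ℕ) : qBinom q 0 (m + 1) = 0 := rfl

lemma qBinom_succ_succ (n m : ℕ) :
    qBinom q (n + 1) (m + 1) = qBinom q n m + q ^ (m + 1) * qBinom q n (m + 1) := rfl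

lemma qBinom_eq_zero_of_lt : ∀ {n m : ℕ}, n < m → qBinom q n m = 0
  | 0, _ + 1, _ => rfl
  | n + 1, m + 1, h => by
    rw [qBinom_succ_succ, qBinom_eq_zero_of_lt (by lia), qBinom_eq_zero_of_lt (by lia)]
    simp

@[simp]
lemma qBinom_self : ∀ n : ℕ, qBinom q n n = 1
  | 0 => rfl
  | n + 1 => by simp [qBinom_succ_succ, qBinom_self n, qBinom_eq_zero_of_lt q n.lt_succ_self]

lemma qBinom_add_succ_succ (m k : ℕ) :
    qBinom q (m + k + 1) (m + 1) = q ^ k * qBinom q (m + k) m + qBinom q (m + k) (m + 1) := by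
  match m, k with
  | m, 0 => simp [qBinom_eq_zero_of_lt q m.lt_succ_self]
  | 0, k + 1 =>
    have ih := qBinom_add_succ_succ 0 k
    simp only [zero_add, qBinom_zero_right, mul_one] at ih ⊢
    calc qBinom q (k + 1 + 1) 1 = 1 + q * (q ^ k + qBinom q k 1) := by
          rw [qBinom_succ_succ, ih]; simp
      _ = q ^ (k + 1) + qBinom q (k + 1) 1 := by
          rw [qBinom_succ_succ q k 0, qBinom_zero_right]; ring
  | m + 1, k + 1 =>
    rw [show m + 1 + (k + 1) = m + (k + 1) + 1 by ring]
    calc qBinom q (m + (k + 1) + 1 + 1) (m + 1 + 1)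
        = (q ^ (k + 1) * qBinom q (m + (k + 1)) m + qBinom q (m + (k + 1)) (m + 1)) +
            q ^ (m + 2) *
              (q ^ k * qBinom q (m + (k + 1)) (m + 1) + qBinom q (m + (k + 1)) (m + 2)) := by
          have ih := qBinom_add_succ_succ (m + 1) k
          rw [show m + 1 + k = m + (k + 1) by ring] at ih
          rw [qBinom_succ_succ, qBinom_add_succ_succ m (k + 1), ih]
      _ = q ^ (k + 1) * qBinom q (m + (k + 1) + 1) (m + 1) +
            qBinom q (m + (k + 1) + 1) (m + 1 + 1) := by
          rw [qBinom_succ_succ q (m + (k + 1)) m, qBinom_succ_succ q (m + (k + 1)) (m + 1)]; ring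
termination_by m + k

end QBinom

/-! ### Subsets of `{0, …, n - 1}` -/

lemma sum_powersetCard_range_succ {M : Type*} [AddCommMonoid M] (n m : ℕ) (g : Finset ℕ → M) :
    ∑ S ∈ powersetCard (m + 1) (range (n + 1)), g S =
      ∑ S ∈ powersetCard m (range n), g (insert n S) +
        ∑ S ∈ powersetCard (m + 1) (range n), g S := by
  have notMem {k : ℕ} {S : Finset ℕ} (hS : S ∈ powersetCard k (range n)) : n ∉ S :=
    fun h => notMem_range_self ((mem_powersetCard.1 hS).1 h)
  rw [range_add_one, powersetCard_succ_insert notMem_range_self, sum_union, sum_image, add_comm]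
  · exact insert_erase_invOn.2.injOn.mono fun S hS => notMem hS
  · refine disjoint_left.2 fun S hS hS' => ?_
    obtain ⟨T, -, rfl⟩ := mem_image.1 hS'
    exact notMem hS (mem_insert_self n T)

lemma count_mem_insert_of_le (S : Finset ℕ) {n i : ℕ} (h : i ≤ n) :
    Nat.count (· ∈ insert n S) i = Nat.count (· ∈ S) i := by
  simp only [Nat.count_eq_card_filter_range]
  congr 1
  exact filter_congr fun j hj => by grind

lemma count_mem_of_subset_range {S : Finset ℕ} {n : ℕ} (h : S ⊆ range n) :
    Nat.count (· ∈ S) n = #S := by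
  rw [Nat.count_eq_card_filter_range, filter_mem_eq_inter, inter_eq_right.2 h]

lemma count_mem_add_count_notMem (S : Finset ℕ) (n : ℕ) :
    Nat.count (· ∈ S) n + Nat.count (· ∉ S) n = n := by
  simp only [Nat.count_eq_card_filter_range, card_filter_add_card_filter_not, card_range]

lemma sum_count_mem (S : Finset ℕ) : ∑ i ∈ S, Nat.count (· ∈ S) i = (#S).choose 2 := by
  induction S using Finset.induction_on_max with
  | empty => simp
  | insert a S ha ih =>
    have haS : a ∉ S := fun h => (ha a h).false
    have count_eq {i : ℕ} (hi : i ≤ a) := count_mem_insert_of_le S hi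
    rw [sum_insert haS, sum_congr rfl fun i hi => count_eq (ha i hi).le, ih, count_eq le_rfl,
      count_mem_of_subset_range fun i hi => mem_range.2 (ha i hi), card_insert_of_notMem haS,
      Nat.choose_succ_succ' _ 1, Nat.choose_one_right]

lemma sum_sub_choose_two (S : Finset ℕ) :
    ∑ i ∈ S, i - (#S).choose 2 = ∑ i ∈ S, Nat.count (· ∉ S) i := by
  rw [← sum_count_mem, Nat.sub_eq_iff_eq_add', ← sum_add_distrib]
  · exact sum_congr rfl fun i _ => (count_mem_add_count_notMem S i).symm
  · exact sum_le_sum fun i _ => Nat.count_le _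

/-- The number of inversions of the `0`-`1` word of length `n` with ones at the places in `S`: the
pairs `j < i < n` with `j ∈ S` and `i ∉ S`. -/
def invNum (S : Finset ℕ) (n : ℕ) : ℕ := ∑ i ∈ range n \ S, Nat.count (· ∈ S) i

lemma invNum_insert_succ (S : Finset ℕ) (n : ℕ) : invNum (insert n S) (n + 1) = invNum S n := by
  have h : range (n + 1) \ insert n S = range n \ S := by grind
  rw [invNum, h]
  exact sum_congr rfl fun i hi => count_mem_insert_of_le S (by grind)

lemma invNum_succ {S : Finset ℕ} {n : ℕ} (h : S ⊆ range n) :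
    invNum S (n + 1) = #S + invNum S n := by
  rw [invNum, range_add_one, insert_sdiff_of_notMem _ fun hn => notMem_range_self (h hn),
    sum_insert (by simp), count_mem_of_subset_range h, invNum]

lemma sum_pow_invNum {R : Type*} [CommSemiring R] (q : R) (n m : ℕ) :
    ∑ S ∈ powersetCard m (range n), q ^ invNum S n = qBinom q n m := by
  induction n generalizing m with
  | zero => cases m <;> simp [invNum]
  | succ n ih =>
    cases m with
    | zero => simp [invNum]
    | succ m =>
      have append_zero {S} (hS : S ∈ powersetCard (m + 1) (range n)) :
          q ^ invNum S (n + 1) = q ^ (m + 1) * q ^ invNum S n := by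
        obtain ⟨hSn, hSm⟩ := mem_powersetCard.1 hS
        rw [invNum_succ hSn, hSm, pow_add]
      simp_rw [sum_powersetCard_range_succ, invNum_insert_succ]
      rw [sum_congr rfl fun S hS => append_zero hS, ← mul_sum, ih, ih, qBinom_succ_succ]

/-! ### Major index of shuffles -/

/-- The sum of the 1-based places `i + 1` over the 0-based places `i < n` satisfying `d`; it is the
major index of a word of length `n + 1` with descents given by `d`. -/
def majSum (d : ℕ → Prop) [DecidablePred d] (n : ℕ) : ℕ := ∑ i ∈ range n with d i, (i + 1)

section MajSum

variable {d d' : ℕ → Prop} [DecidablePred d] [DecidablePred d']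

@[simp]
lemma majSum_zero : majSum d 0 = 0 := rfl

lemma majSum_succ (n : ℕ) : majSum d (n + 1) = majSum d n + if d n then n + 1 else 0 := by
  simp only [majSum, sum_filter, sum_range_succ]

lemma majSum_congr {n : ℕ} (h : ∀ i < n, (d i ↔ d' i)) : majSum d n = majSum d' n :=
  sum_congr (filter_congr fun i hi => h i (mem_range.1 hi)) fun _ _ => rfl

end MajSum

section Shuffle

variable (e d : ℕ → Prop)

/-- The descent predicate of the shuffle of a word `w`, whose letters occupy the places in `S`, with
copies of a single letter, the blank, at all other places. Only the comparisons that matter are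
recorded: `d r` says that `w` has a descent at `r`, and `e r` says that the letter `r` of `w` is
larger than the blank; the other letters of `w` are smaller than the blank. All places are
0-based. -/
def ShuffleDes (S : Finset ℕ) (i : ℕ) : Prop :=
  if i ∈ S then
    if i + 1 ∈ S then d (Nat.count (· ∈ S) i) else e (Nat.count (· ∈ S) i)
  else
    i + 1 ∈ S ∧ ¬ e (Nat.count (· ∈ S) i)

variable [DecidablePred e] [DecidablePred d]

instance (S : Finset ℕ) : DecidablePred (ShuffleDes e d S) := fun i => by
  unfold ShuffleDes; infer_instance

variable {e d}

lemma majSum_shuffleDes_insert (S : Finset ℕ) (n : ℕ) :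
    majSum (ShuffleDes e d (insert (n + 1) S)) n = majSum (ShuffleDes e d S) n :=
  majSum_congr fun i hi => by
    simp only [ShuffleDes, count_mem_insert_of_le S (show i ≤ n + 1 by lia)]
    simp only [mem_insert, show i ≠ n + 1 by lia, show i + 1 ≠ n + 1 by lia, false_or]

variable {S : Finset ℕ} {n : ℕ} (hS : S ⊆ range n)
include hS

lemma majSum_shuffleDes_blank_blank :
    majSum (ShuffleDes e d S) (n + 1) = majSum (ShuffleDes e d S) n := by
  have hn : n ∉ S := fun h => by simpa using hS h
  have hn' : n + 1 ∉ S := fun h => by simpa using hS h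
  simp [majSum_succ, ShuffleDes, hn, hn']

lemma majSum_shuffleDes_blank_letter :
    majSum (ShuffleDes e d (insert (n + 1) S)) (n + 1) =
      majSum (ShuffleDes e d S) n + if e #S then 0 else n + 1 := by
  have hn : n ∉ S := fun h => by simpa using hS h
  simp only [majSum_succ, majSum_shuffleDes_insert, ShuffleDes, count_mem_insert_of_le S n.le_succ,
    count_mem_of_subset_range hS]
  simp [hn]

lemma majSum_shuffleDes_letter_blank :
    majSum (ShuffleDes e d (insert n S)) (n + 1) =
      majSum (ShuffleDes e d (insert n S)) n + if e #S then n + 1 else 0 := by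
  have hn' : n + 1 ∉ S := fun h => by simpa using hS h
  simp only [majSum_succ, ShuffleDes, count_mem_insert_of_le S le_rfl, count_mem_of_subset_range hS]
  simp [hn']

lemma majSum_shuffleDes_letter_letter :
    majSum (ShuffleDes e d (insert (n + 1) (insert n S))) (n + 1) =
      majSum (ShuffleDes e d (insert n S)) n + if d #S then n + 1 else 0 := by
  simp only [majSum_succ, majSum_shuffleDes_insert, ShuffleDes,
    count_mem_insert_of_le _ n.le_succ, count_mem_insert_of_le S le_rfl,
    count_mem_of_subset_range hS]
  simp

end Shuffle

section ShuffleGenFun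

variable {R : Type*} [CommSemiring R] (q : R) (e d : ℕ → Prop) [DecidablePred e] [DecidablePred d]

/-- The generating function of the major index over the shuffles of length `n + 1` whose last letter
is the letter `m` of the word. -/
def letterGenFun (n m : ℕ) : R :=
  ∑ S ∈ powersetCard m (range n), q ^ majSum (ShuffleDes e d (insert n S)) n

/-- The generating function of the major index over the shuffles of length `n + 1` of the first `m`
letters of the word that end with a blank. -/
def blankGenFun (n m : ℕ) : R :=
  ∑ S ∈ powersetCard m (range n), q ^ majSum (ShuffleDes e d S) n

lemma letterGenFun_succ_zero (n : ℕ) :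
    letterGenFun q e d (n + 1) 0 = blankGenFun q e d n 0 * q ^ if e 0 then 0 else n + 1 := by
  rw [letterGenFun, blankGenFun, powersetCard_zero, powersetCard_zero, sum_singleton, sum_singleton,
    majSum_shuffleDes_blank_letter (empty_subset _), card_empty, pow_add]

lemma letterGenFun_succ_succ (n m : ℕ) :
    letterGenFun q e d (n + 1) (m + 1) =
      letterGenFun q e d n m * (q ^ if d m then n + 1 else 0) +
        blankGenFun q e d n (m + 1) * q ^ if e (m + 1) then 0 else n + 1 := by
  simp only [letterGenFun, blankGenFun, sum_powersetCard_range_succ, sum_mul]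
  congr 1 <;> refine sum_congr rfl fun S hS => ?_ <;> obtain ⟨hSn, hSm⟩ := mem_powersetCard.1 hS
  · rw [majSum_shuffleDes_letter_letter hSn, hSm, pow_add]
  · rw [majSum_shuffleDes_blank_letter hSn, hSm, pow_add]

lemma blankGenFun_succ_zero (n : ℕ) :
    blankGenFun q e d (n + 1) 0 = blankGenFun q e d n 0 := by
  simp only [blankGenFun, powersetCard_zero, sum_singleton,
    majSum_shuffleDes_blank_blank (empty_subset _)]

lemma blankGenFun_succ_succ (n m : ℕ) :
    blankGenFun q e d (n + 1) (m + 1) =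
      letterGenFun q e d n m * (q ^ if e m then n + 1 else 0) + blankGenFun q e d n (m + 1) := by
  simp only [letterGenFun, blankGenFun, sum_powersetCard_range_succ, sum_mul]
  congr 1 <;> refine sum_congr rfl fun S hS => ?_ <;> obtain ⟨hSn, hSm⟩ := mem_powersetCard.1 hS
  · rw [majSum_shuffleDes_letter_blank hSn, hSm, pow_add]
  · rw [majSum_shuffleDes_blank_blank hSn]

variable {e d}

/-- The exponents `n - m` and `m - 1` are only truncated where both sides vanish, respectively where
the last factor of `blankGenFun` is `1`. -/
theorem letterGenFun_and_blankGenFun_eq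
    (hd : ∀ i, e i → ¬ e (i + 1) → d i) (hd' : ∀ i, ¬ e i → e (i + 1) → ¬ d i) (n m : ℕ) :
    letterGenFun q e d n m = q ^ majSum d m * (qBinom q n m * if e m then 1 else q ^ (n - m)) ∧
    blankGenFun q e d n m =
      q ^ majSum d (m - 1) * (qBinom q n m * if e (m - 1) then q ^ m else 1) := by
  induction n generalizing m with
  | zero => cases m <;> simp [letterGenFun, blankGenFun]
  | succ n ih =>
    cases m with
    | zero =>
      rw [letterGenFun_succ_zero, blankGenFun_succ_zero, (ih 0).2]
      split_ifs <;> simp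
    | succ m =>
      rw [letterGenFun_succ_succ, blankGenFun_succ_succ, (ih m).1, (ih (m + 1)).2, majSum_succ,
        Nat.add_sub_cancel]
      rcases lt_or_ge n m with hnm | hmn
      · simp [qBinom_eq_zero_of_lt q, hnm, hnm.trans m.lt_succ_self]
      obtain ⟨k, rfl⟩ := Nat.exists_eq_add_of_le hmn
      simp only [Nat.add_sub_cancel_left, show m + k + 1 - (m + 1) = k by lia]
      have pascal := qBinom_succ_succ q (m + k) m
      have pascal' := qBinom_add_succ_succ q m k
      constructor
      · by_cases hm : e m <;> by_cases hm' : e (m + 1)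
        · by_cases hdm : d m
          · simp only [hm, hm', hdm, if_true, pascal']; ring
          · simp only [hm, hm', hdm, if_true, if_false, pascal]; ring
        · simp only [hm, hm', hd m hm hm', if_true, if_false, pascal]; ring
        · simp only [hm, hm', hd' m hm hm', if_true, if_false, pascal']; ring
        · by_cases hdm : d m
          · simp only [hm, hm', hdm, if_true, if_false, pascal']; ring
          · simp only [hm, hm', hdm, if_false, pascal]; ring
      · by_cases hm : e m <;> simp only [hm, if_true, if_false, pascal'] <;> ring

theorem sum_pow_majSum_shuffleDes
    (hd : ∀ i, e i → ¬ e (i + 1) → d i) (hd' : ∀ i, ¬ e i → e (i + 1) → ¬ d i) (n m : ℕ) :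
    ∑ S ∈ powersetCard m (range n), q ^ majSum (ShuffleDes e d S) (n - 1) =
      q ^ majSum d (m - 1) * qBinom q n m := by
  cases n with
  | zero => cases m <;> simp
  | succ n =>
    cases m with
    | zero => simpa [blankGenFun] using (letterGenFun_and_blankGenFun_eq q hd hd' n 0).2
    | succ m =>
      rw [sum_powersetCard_range_succ, Nat.add_sub_cancel, ← letterGenFun, ← blankGenFun,
        (letterGenFun_and_blankGenFun_eq q hd hd' n m).1,
        (letterGenFun_and_blankGenFun_eq q hd hd' n (m + 1)).2, Nat.add_sub_cancel]
      rcases lt_or_ge n m with hnm | hmn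
      · simp [qBinom_eq_zero_of_lt q, hnm, hnm.trans m.lt_succ_self]
      obtain ⟨k, rfl⟩ := Nat.exists_eq_add_of_le hmn
      by_cases hm : e m
      · simp only [hm, if_true, qBinom_succ_succ]; ring
      · simp only [hm, if_false, Nat.add_sub_cancel_left, qBinom_add_succ_succ]; ring

end ShuffleGenFun

/-! ### The flag major index -/

lemma sum_pow_rotate {R : Type*} [CommSemiring R] (q : R) {t N : ℕ} (h : t ≤ N) :
    ∑ r ∈ range N, q ^ (r + if r < t then N else 0) = q ^ t * qint q N := by
  obtain ⟨k, rfl⟩ := Nat.exists_eq_add_of_le h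
  have below : ∑ r ∈ range t, q ^ (r + if r < t then t + k else 0) =
      q ^ t * ∑ r ∈ range t, q ^ (k + r) := by
    rw [mul_sum]
    exact sum_congr rfl fun r hr => by rw [if_pos (mem_range.1 hr)]; ring
  have above : ∑ r ∈ range k, q ^ (t + r + if t + r < t then t + k else 0) = q ^ t * qint q k := by
    rw [qint, mul_sum]
    exact sum_congr rfl fun r _ => by rw [if_neg (by lia), add_zero, pow_add]
  rw [sum_range_add, below, above, ← mul_add, qint, qint, add_comm t k, sum_range_add, add_comm]

namespace CP

variable {ℓ n : ℕ}

/-- The colored word of `σ` has a descent at the 0-based place `i`. -/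
def IsDes (σ : CP ℓ n) (i : ℕ) : Prop := gtLetter (letter σ i) (letter σ (i + 1))

instance (σ : CP ℓ n) : DecidablePred (IsDes σ) := fun i => by
  unfold IsDes; infer_instance

lemma maj_eq_majSum (σ : CP ℓ n) : maj σ = majSum (IsDes σ) (n - 1) := rfl

lemma letter_of_lt (σ : CP ℓ n) {i : ℕ} (h : i < n) :
    letter σ i = ((σ.2 ⟨i, h⟩ : ℕ), (σ.1 ⟨i, h⟩ : ℕ)) := dif_pos h

/-- The rank of a letter of `Σ_{ℓ,n+1}`, that is, the number of letters larger than it. -/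
def letterRank : Fin ℓ × Fin (n + 1) ≃ Fin (ℓ * (n + 1)) :=
  ((Equiv.refl _).prodCongr Fin.revPerm).trans finProdFinEquiv

lemma letterRank_val (a : Fin ℓ × Fin (n + 1)) :
    (letterRank a : ℕ) = (n - a.2 : ℕ) + (n + 1) * a.1 := by
  simp [letterRank]

lemma sum_letterRank {M : Type*} [AddCommMonoid M] (ℓ n : ℕ) (f : ℕ → M) :
    ∑ a : Fin ℓ × Fin (n + 1), f (letterRank a) = ∑ r ∈ range (ℓ * (n + 1)), f r := by
  rw [letterRank.sum_comp fun r => f r, Fin.sum_univ_eq_sum_range]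

/-- The colored permutation with last letter `a` (given by its color and its 0-based absolute value)
whose other letters standardize to `π`. -/
def snoc (a : Fin ℓ × Fin (n + 1)) (π : CP ℓ n) : CP ℓ (n + 1) :=
  (finSuccEquivLast.trans ((Equiv.optionCongr π.1).trans (finSuccEquiv' a.2).symm),
    Fin.snoc π.2 a.1)

section Snoc

variable (a : Fin ℓ × Fin (n + 1)) (π : CP ℓ n)

@[simp]
lemma snoc_fst_last : (snoc a π).1 (Fin.last n) = a.2 := by simp [snoc]

@[simp]
lemma snoc_fst_castSucc (i : Fin n) : (snoc a π).1 i.castSucc = a.2.succAbove (π.1 i) := by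
  simp [snoc]

@[simp]
lemma snoc_snd_last : (snoc a π).2 (Fin.last n) = a.1 := by simp [snoc]

@[simp]
lemma snoc_snd_castSucc (i : Fin n) : (snoc a π).2 i.castSucc = π.2 i := by simp [snoc]

lemma snoc_bijective :
    Function.Bijective fun x : (Fin ℓ × Fin (n + 1)) × CP ℓ n => snoc x.1 x.2 := by
  refine (Fintype.bijective_iff_injective_and_card _).2 ⟨?_, ?_⟩
  · rintro ⟨a, π⟩ ⟨b, ρ⟩ (h : snoc a π = snoc b ρ)
    obtain rfl : a = b := by
      rw [Prod.ext_iff, ← snoc_snd_last a π, ← snoc_fst_last a π, h]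
      exact ⟨snoc_snd_last b ρ, snoc_fst_last b ρ⟩
    congr 1
    refine Prod.ext (Equiv.ext fun i => a.2.succAbove_right_injective ?_) (funext fun i => ?_)
    · rw [← snoc_fst_castSucc, h, snoc_fst_castSucc]
    · rw [← snoc_snd_castSucc a, h, snoc_snd_castSucc]
  · simp [Fintype.card_perm, Nat.factorial_succ, pow_succ]
    ring

lemma sum_snoc {M : Type*} [AddCommMonoid M] (g : CP ℓ (n + 1) → M) :
    ∑ σ, g σ = ∑ a : Fin ℓ × Fin (n + 1), ∑ π : CP ℓ n, g (snoc a π) := by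
  rw [← snoc_bijective.sum_comp g, Fintype.sum_prod_type]

lemma letter_snoc_last : letter (snoc a π) n = ((a.1 : ℕ), (a.2 : ℕ)) := by
  rw [letter_of_lt _ n.lt_succ_self]
  exact congrArg₂ Prod.mk (congrArg Fin.val (snoc_snd_last a π))
    (congrArg Fin.val (snoc_fst_last a π))

lemma letter_snoc_of_lt {i : ℕ} (h : i < n) :
    letter (snoc a π) i = ((π.2 ⟨i, h⟩ : ℕ), (a.2.succAbove (π.1 ⟨i, h⟩) : ℕ)) := by
  rw [letter_of_lt _ (h.trans n.lt_succ_self), ← snoc_fst_castSucc, ← snoc_snd_castSucc a]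
  rfl

lemma isDes_snoc_of_lt {i : ℕ} (h : i + 1 < n) : IsDes (snoc a π) i ↔ IsDes π i := by
  have hi : i < n := i.lt_succ_self.trans h
  rw [IsDes, IsDes, letter_snoc_of_lt a π hi, letter_snoc_of_lt a π h, letter_of_lt π hi,
    letter_of_lt π h]
  simp [gtLetter]

lemma col_snoc : col (snoc a π) = col π + a.1 := by simp [col, Fin.sum_univ_castSucc]

variable (b : Fin ℓ × Fin (n + 2))

/-- Of the letters larger than `b`, exactly `b.1` have the same absolute value as `b`; the others
standardize to the `letterRank b - b.1` largest letters of `Σ_{ℓ,n+1}`. -/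
lemma isDes_snoc_snoc : IsDes (snoc b (snoc a π)) n ↔ letterRank a + (b.1 : ℕ) < letterRank b := by
  have hlast : letter (snoc b (snoc a π)) n = ((a.1 : ℕ), (b.2.succAbove a.2 : ℕ)) := by
    rw [letter_snoc_of_lt _ _ n.lt_succ_self]
    exact congrArg₂ Prod.mk (congrArg Fin.val (snoc_snd_last a π))
      (congrArg (Fin.val ∘ b.2.succAbove) (snoc_fst_last a π))
  have hval : (b.2 : ℕ) < b.2.succAbove a.2 ↔ (b.2 : ℕ) ≤ a.2 :=
    Fin.lt_succAbove_iff_le_castSucc ..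
  rw [IsDes, hlast, letter_snoc_last, gtLetter, hval, letterRank_val, letterRank_val]
  rcases lt_trichotomy (a.1 : ℕ) b.1 with h | h | h
  · have := Nat.mul_le_mul_left (n + 1) (Nat.succ_le_of_lt h)
    grind
  · grind
  · have := Nat.mul_le_mul_left (n + 1) (Nat.succ_le_of_lt h)
    grind

lemma fmaj_snoc_snoc :
    fmaj (snoc b (snoc a π)) = b.1 + fmaj (snoc a π) +
      if letterRank a + (b.1 : ℕ) < letterRank b then ℓ * (n + 1) else 0 := by
  have maj_eq : maj (snoc b (snoc a π)) =
      maj (snoc a π) + if letterRank a + (b.1 : ℕ) < letterRank b then n + 1 else 0 := by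
    simp only [maj_eq_majSum, Nat.add_sub_cancel, majSum_succ, isDes_snoc_snoc]
    rw [majSum_congr fun i hi => isDes_snoc_of_lt b (snoc a π) (Nat.succ_lt_succ hi)]
  rw [fmaj, maj_eq, col_snoc b, fmaj]
  split_ifs <;> ring

end Snoc

lemma fmaj_of_zero (π : CP ℓ 0) : fmaj π = 0 := rfl

lemma fmaj_snoc_of_zero (a : Fin ℓ × Fin 1) (π : CP ℓ 0) : fmaj (snoc a π) = a.1 := by
  rw [fmaj, maj_eq_majSum, col_snoc]
  simp [col]

section FmajGenFun

variable {R : Type*} [CommSemiring R] (q : R)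

lemma sum_pow_fmaj_snoc (a : Fin ℓ × Fin (n + 1)) :
    ∑ π : CP ℓ n, q ^ fmaj (snoc a π) =
      q ^ (letterRank a : ℕ) * ∏ j ∈ Icc 1 n, qint q (j * ℓ) := by
  induction n with
  | zero => simp [fmaj_snoc_of_zero, letterRank_val]
  | succ n ih =>
    obtain ⟨t, ht, htN⟩ : ∃ t, (letterRank a : ℕ) = t + a.1 ∧ t ≤ ℓ * (n + 1) := by
      refine ⟨n + 1 - a.2 + (n + 1) * a.1, by rw [letterRank_val]; ring, ?_⟩
      have := Nat.mul_le_mul_right (n + 1) (Nat.succ_le_of_lt a.1.2)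
      grind
    have snoc_snoc (b : Fin ℓ × Fin (n + 1)) (π : CP ℓ n) : q ^ fmaj (snoc a (snoc b π)) =
        q ^ fmaj (snoc b π) *
          (q ^ (a.1 : ℕ) * q ^ if (letterRank b : ℕ) < t then ℓ * (n + 1) else 0) := by
      rw [fmaj_snoc_snoc, ht]
      simp only [add_lt_add_iff_right]
      ring
    calc ∑ π, q ^ fmaj (snoc a π)
        = ∑ b : Fin ℓ × Fin (n + 1),
            q ^ (letterRank b + if (letterRank b : ℕ) < t then ℓ * (n + 1) else 0) *
              (q ^ (a.1 : ℕ) * ∏ j ∈ Icc 1 n, qint q (j * ℓ)) := by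
          rw [sum_snoc]
          refine sum_congr rfl fun b _ => ?_
          simp_rw [snoc_snoc, ← sum_mul, ih]
          ring
      _ = q ^ t * qint q (ℓ * (n + 1)) * (q ^ (a.1 : ℕ) * ∏ j ∈ Icc 1 n, qint q (j * ℓ)) := by
          rw [← sum_mul, sum_letterRank ℓ n fun r => q ^ (r + if r < t then ℓ * (n + 1) else 0),
            sum_pow_rotate q htN]
      _ = q ^ (letterRank a : ℕ) * ∏ j ∈ Icc 1 (n + 1), qint q (j * ℓ) := by
          rw [prod_Icc_succ_top (by lia), mul_comm (n + 1) ℓ, ht]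
          ring

theorem sum_pow_fmaj (ℓ n : ℕ) : ∑ σ : CP ℓ n, q ^ fmaj σ = ∏ j ∈ Icc 1 n, qint q (j * ℓ) := by
  cases n with
  | zero => simp [fmaj_of_zero]
  | succ n =>
    simp_rw [sum_snoc, sum_pow_fmaj_snoc, ← sum_mul]
    rw [sum_letterRank ℓ n fun r => q ^ r, ← qint, prod_Icc_succ_top (by lia), mul_comm (n + 1),
      mul_comm]

end FmajGenFun

end CP

/-! ### The places of a subword -/

/-- The set of places of a subword of length `m` in a word of length `n`, where the subword is given
by the increasing enumeration `f` of its places. -/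
def placeSet {m n : ℕ} (f : Fin m ↪o Fin n) : Finset ℕ :=
  univ.map (f.toEmbedding.trans Fin.valEmbedding)

section PlaceSet

variable {m n : ℕ} (f : Fin m ↪o Fin n)

lemma mem_placeSet {i : ℕ} : i ∈ placeSet f ↔ ∃ p, (f p : ℕ) = i := by simp [placeSet]

lemma val_mem_placeSet {i : Fin n} : (i : ℕ) ∈ placeSet f ↔ i ∈ Set.range f := by
  simp [mem_placeSet, Fin.val_inj]

lemma count_mem_placeSet (p : Fin m) : Nat.count (· ∈ placeSet f) (f p) = p := by
  have below : {i ∈ range (f p) | i ∈ placeSet f} =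
      (Iio p).map (f.toEmbedding.trans Fin.valEmbedding) := by
    ext i
    simp only [mem_filter, mem_range, mem_placeSet, mem_map, mem_Iio]
    constructor
    · rintro ⟨hi, r, rfl⟩
      exact ⟨r, f.lt_iff_lt.1 hi, rfl⟩
    · rintro ⟨r, hr, rfl⟩
      exact ⟨f.lt_iff_lt.2 hr, r, rfl⟩
  rw [Nat.count_eq_card_filter_range, below, card_map, Fin.card_Iio]

lemma eq_succ_of_apply_eq_succ {p r : Fin m} (h : (f r : ℕ) = f p + 1) : (r : ℕ) = p + 1 := by
  rw [← count_mem_placeSet f r, h, Nat.count_succ, count_mem_placeSet,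
    if_pos ((mem_placeSet f).2 ⟨p, rfl⟩)]

instance : Fintype (Fin m ↪o Fin n) := Fintype.ofEquiv _ Set.powersetCard.ofFinEmbEquiv.symm

lemma sum_placeSet {M : Type*} [AddCommMonoid M] (m n : ℕ) (g : Finset ℕ → M) :
    ∑ f : Fin m ↪o Fin n, g (placeSet f) = ∑ S ∈ powersetCard m (range n), g S := by
  have range_eq : range n = (univ : Finset (Fin n)).map Fin.valEmbedding := by ext i; simp
  rw [range_eq, powersetCard_map, sum_map, sum_subtype _ fun S => mem_powersetCard_univ]
  exact Fintype.sum_equiv Set.powersetCard.ofFinEmbEquiv _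
    (fun S => g (S.1.map Fin.valEmbedding)) fun f => congrArg g (map_map ..).symm

end PlaceSet

namespace CP

/-! ### Inserting fixed points -/

section InsertFixed

variable {ℓ m n : ℕ}

/-- The colored permutation whose subword at the places enumerated by `f` standardizes to `τ`, and
whose other places are fixed points. -/
noncomputable def insertFixed [NeZero ℓ] (f : Fin m ↪o Fin n) (τ : CP ℓ m) : CP ℓ n :=
  (τ.1.viaEmbedding f.toEmbedding, Function.extend f τ.2 fun _ => 0)

lemma mem_fixSet {σ : CP ℓ n} {i : Fin n} : i ∈ fixSet σ ↔ σ.1 i = i ∧ (σ.2 i : ℕ) = 0 := by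
  simp [fixSet]

variable [NeZero ℓ] (f : Fin m ↪o Fin n) (τ : CP ℓ m)

@[simp]
lemma insertFixed_fst_apply (p : Fin m) : (insertFixed f τ).1 (f p) = f (τ.1 p) :=
  τ.1.viaEmbedding_apply f.toEmbedding p

@[simp]
lemma insertFixed_snd_apply (p : Fin m) : (insertFixed f τ).2 (f p) = τ.2 p := by
  simp only [insertFixed, f.injective.extend_apply]

variable {f} in
lemma insertFixed_fst_of_notMem {i : Fin n} (h : i ∉ Set.range f) : (insertFixed f τ).1 i = i :=
  τ.1.viaEmbedding_apply_of_notMem f.toEmbedding i h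

variable {f} in
lemma insertFixed_snd_of_notMem {i : Fin n} (h : i ∉ Set.range f) : (insertFixed f τ).2 i = 0 := by
  simp only [insertFixed, Function.extend_apply' _ _ _ h]

lemma insertFixed_injective : Function.Injective (insertFixed f : CP ℓ m → CP ℓ n) := by
  intro τ ρ h
  refine Prod.ext (Equiv.ext fun p => f.injective ?_) (funext fun p => ?_)
  · rw [← insertFixed_fst_apply, h, insertFixed_fst_apply]
  · rw [← insertFixed_snd_apply f, h, insertFixed_snd_apply]

lemma col_insertFixed : col (insertFixed f τ) = col τ := by
  have sum_eq : ∑ i ∈ univ.map f.toEmbedding, ((insertFixed f τ).2 i : ℕ) =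
      col (insertFixed f τ) :=
    sum_subset (subset_univ _) fun i _ hi => by
      rw [insertFixed_snd_of_notMem τ (by simpa using hi), Fin.val_zero]
  rw [← sum_eq, sum_map, col]
  exact sum_congr rfl fun p _ => congrArg Fin.val (insertFixed_snd_apply f τ p)

variable {τ}

lemma compl_fixSet_insertFixed (hτ : fixSet τ = ∅) :
    (fixSet (insertFixed f τ))ᶜ = univ.map f.toEmbedding := by
  ext i
  by_cases hi : i ∈ Set.range f
  · obtain ⟨p, rfl⟩ := hi
    have hp : p ∉ fixSet τ := hτ ▸ notMem_empty p
    simpa [mem_fixSet] using hp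
  · have hi' : i ∉ univ.map f.toEmbedding := by simpa using hi
    simp [hi', mem_fixSet, insertFixed_fst_of_notMem τ hi, insertFixed_snd_of_notMem τ hi]

end InsertFixed

section Der

variable {ℓ n : ℕ} (σ : CP ℓ n)

/-- The increasing enumeration of the nonfixed places of `σ`. -/
def nonfixEmb : Fin (n - fix σ) ↪o Fin n := ((fixSet σ)ᶜ).orderEmbOfFin (card_nonfix σ)

lemma mem_range_nonfixEmb {i : Fin n} : i ∈ Set.range (nonfixEmb σ) ↔ i ∉ fixSet σ := by
  simp [nonfixEmb]

lemma image_compl_fixSet : ((fixSet σ)ᶜ).image σ.1 = (fixSet σ)ᶜ := by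
  refine eq_of_subset_of_card_le (image_subset_iff.2 fun i hi => ?_)
    (card_image_of_injective _ σ.1.injective).ge
  simp only [mem_compl, mem_fixSet, EmbeddingLike.apply_eq_iff_eq] at hi ⊢
  exact fun h => hi ⟨h.1, by rw [← h.1]; exact h.2⟩

/-- The absolute values of the nonfixed letters are the nonfixed places, so the two relabellings in
the definition of `Der` agree. -/
lemma nonfixEmb_Der (p : Fin (n - fix σ)) :
    nonfixEmb σ ((Der σ).1 p) = σ.1 (nonfixEmb σ p) := by
  have relabel_eq : nonfixEmb σ =
      (((fixSet σ)ᶜ).image σ.1).orderEmbOfFin (card_vals σ) := by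
    simp only [nonfixEmb, image_compl_fixSet]
  refine (DFunLike.congr_fun relabel_eq _).trans ?_
  exact congrArg Subtype.val ((((fixSet σ)ᶜ.image σ.1).orderIsoOfFin (card_vals σ)).apply_symm_apply
    (derMid σ (((fixSet σ)ᶜ).orderIsoOfFin (card_nonfix σ) p)))

lemma Der_snd (p : Fin (n - fix σ)) : (Der σ).2 p = σ.2 (nonfixEmb σ p) := rfl

lemma fixSet_Der : fixSet (Der σ) = ∅ := by
  refine eq_empty_iff_forall_notMem.2 fun p hp => ?_
  rw [mem_fixSet] at hp
  refine (mem_range_nonfixEmb σ).1 ⟨p, rfl⟩ (mem_fixSet.2 ⟨?_, hp.2⟩)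
  rw [← nonfixEmb_Der, hp.1]

lemma insertFixed_Der [NeZero ℓ] : insertFixed (nonfixEmb σ) (Der σ) = σ := by
  have letter_eq (i : Fin n) : (insertFixed (nonfixEmb σ) (Der σ)).1 i = σ.1 i ∧
      (insertFixed (nonfixEmb σ) (Der σ)).2 i = σ.2 i := by
    by_cases hi : i ∈ Set.range (nonfixEmb σ)
    · obtain ⟨p, rfl⟩ := hi
      simp [nonfixEmb_Der, Der_snd]
    · have hfix := mem_fixSet.1 (not_not.1 (mt (mem_range_nonfixEmb σ).2 hi))
      rw [insertFixed_fst_of_notMem _ hi, insertFixed_snd_of_notMem _ hi]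
      exact ⟨hfix.1.symm, Fin.ext hfix.2.symm⟩
  exact Prod.ext (Equiv.ext fun i => (letter_eq i).1) (funext fun i => (letter_eq i).2)

lemma maf_eq : maf σ = maj (Der σ) + invNum (placeSet (nonfixEmb σ)) n := by
  have mem_iff {i : ℕ} (hi : i < n) :
      i ∈ placeSet (nonfixEmb σ) ↔ i ∉ (fixSet σ).map Fin.valEmbedding := by
    obtain ⟨i, rfl⟩ : ∃ j : Fin n, (j : ℕ) = i := ⟨⟨i, hi⟩, rfl⟩
    rw [val_mem_placeSet, mem_range_nonfixEmb]
    simp [Fin.val_inj]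
  have compl_eq : range n \ placeSet (nonfixEmb σ) = (fixSet σ).map Fin.valEmbedding := by
    ext i
    have lt_of_mem (hi : i ∈ (fixSet σ).map Fin.valEmbedding) : i < n := by
      obtain ⟨j, -, rfl⟩ := mem_map.1 hi
      exact j.2
    grind
  have count_eq {i : ℕ} (hi : i ∈ range n \ placeSet (nonfixEmb σ)) :
      Nat.count (· ∈ placeSet (nonfixEmb σ)) i =
        Nat.count (· ∉ (fixSet σ).map Fin.valEmbedding) i := by
    simp only [Nat.count_eq_card_filter_range]
    congr 1
    exact filter_congr fun j hj => mem_iff (by grind)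
  rw [maf, invNum, sum_congr rfl fun i hi => count_eq hi, compl_eq, ← sum_sub_choose_two, sum_map,
    card_map]
  rfl

end Der

/-- A colored permutation is the same as the enumeration of its nonfixed places together with its
derangement part. -/
noncomputable def derEquiv (ℓ n : ℕ) [NeZero ℓ] :
    CP ℓ n ≃ Σ m : Fin (n + 1), (Fin m ↪o Fin n) × {τ : CP ℓ m // fixSet τ = ∅} where
  toFun σ := ⟨⟨n - fix σ, by lia⟩, nonfixEmb σ, Der σ, fixSet_Der σ⟩
  invFun x := insertFixed x.2.1 x.2.2.1
  left_inv σ := insertFixed_Der σ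
  right_inv := by
    refine Function.LeftInverse.rightInverse_of_injective (fun σ => insertFixed_Der σ) ?_
    rintro ⟨⟨m, hm⟩, f, τ, hτ⟩ ⟨⟨k, hk⟩, g, ρ, hρ⟩ (h : insertFixed f τ = insertFixed g ρ)
    have map_eq : univ.map f.toEmbedding = univ.map g.toEmbedding := by
      rw [← compl_fixSet_insertFixed f hτ, h, compl_fixSet_insertFixed g hρ]
    obtain rfl : m = k := by simpa using congrArg card map_eq
    obtain rfl : f = g := Set.powersetCard.ofFinEmbEquiv.injective (Subtype.ext map_eq)
    obtain rfl : τ = ρ := insertFixed_injective f h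
    rfl

/-! ### Descents next to fixed points -/

/-- The letter of `τ` at the 0-based place `i` is an excedance. This is false beyond the end of the
word, where `letter` takes its default value `(0, 0)`. -/
def IsExc {ℓ m : ℕ} (τ : CP ℓ m) (i : ℕ) : Prop := (letter τ i).1 = 0 ∧ i < (letter τ i).2

instance {ℓ m : ℕ} (τ : CP ℓ m) : DecidablePred (IsExc τ) := fun i => by
  unfold IsExc; infer_instance

section Descents

variable {ℓ m n : ℕ} {τ : CP ℓ m}

lemma letter_of_le (τ : CP ℓ m) {i : ℕ} (h : m ≤ i) : letter τ i = (0, 0) := dif_neg h.not_gt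

lemma snd_letter_ne (hτ : fixSet τ = ∅) {i : ℕ} (h : i < m) (h0 : (letter τ i).1 = 0) :
    (letter τ i).2 ≠ i := by
  have hi : (⟨i, h⟩ : Fin m) ∉ fixSet τ := hτ ▸ notMem_empty _
  rw [letter_of_lt τ h] at h0 ⊢
  exact fun h1 => hi (mem_fixSet.2 ⟨Fin.ext h1, h0⟩)

lemma isDes_of_isExc (hτ : fixSet τ = ∅) (i : ℕ) (h : IsExc τ i) (h' : ¬ IsExc τ (i + 1)) :
    IsDes τ i := by
  unfold IsDes gtLetter
  unfold IsExc at h h'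
  rcases lt_or_ge (i + 1) m with hi | hi
  · have := snd_letter_ne hτ hi
    lia
  · rw [letter_of_le τ hi]
    lia

lemma not_isDes_of_not_isExc (i : ℕ) (h : ¬ IsExc τ i) (h' : IsExc τ (i + 1)) : ¬ IsDes τ i := by
  unfold IsDes gtLetter
  unfold IsExc at h h'
  lia

variable [NeZero ℓ] {f : Fin m ↪o Fin n}

lemma letter_insertFixed_apply (p : Fin m) :
    letter (insertFixed f τ) (f p) = ((τ.2 p : ℕ), (f (τ.1 p) : ℕ)) := by
  rw [letter_of_lt _ (f p).2, Fin.eta, insertFixed_fst_apply, insertFixed_snd_apply]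

lemma letter_insertFixed_of_notMem {i : Fin n} (h : i ∉ Set.range f) :
    letter (insertFixed f τ) i = (0, (i : ℕ)) := by
  rw [letter_of_lt _ i.2, Fin.eta, insertFixed_fst_of_notMem τ h, insertFixed_snd_of_notMem τ h,
    Fin.val_zero]

lemma isDes_insertFixed_of_range_of_range {p r : Fin m} (h : (f r : ℕ) = f p + 1) :
    IsDes (insertFixed f τ) (f p) ↔ IsDes τ p := by
  rw [IsDes, IsDes, ← h, ← eq_succ_of_apply_eq_succ f h, letter_insertFixed_apply,
    letter_insertFixed_apply, letter_of_lt τ p.2, letter_of_lt τ r.2]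
  simp [gtLetter]

lemma isDes_insertFixed_of_range_of_notMem {p : Fin m} {i : Fin n} (hi : i ∉ Set.range f)
    (h : (i : ℕ) = f p + 1) : IsDes (insertFixed f τ) (f p) ↔ IsExc τ p := by
  have hne : (f (τ.1 p) : ℕ) ≠ i := fun h' => hi ⟨τ.1 p, Fin.ext h'⟩
  have hlt : (f p : ℕ) < f (τ.1 p) ↔ (p : ℕ) < τ.1 p := f.lt_iff_lt
  rw [IsDes, IsExc, ← h, letter_insertFixed_apply, letter_insertFixed_of_notMem hi,
    letter_of_lt τ p.2, gtLetter]
  simp only [Fin.eta]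
  lia

lemma isDes_insertFixed_of_notMem_of_range (hτ : fixSet τ = ∅) {p : Fin m} {i : Fin n}
    (hi : i ∉ Set.range f) (h : (f p : ℕ) = i + 1) :
    IsDes (insertFixed f τ) i ↔ ¬ IsExc τ p := by
  have hne : (f (τ.1 p) : ℕ) ≠ i := fun h' => hi ⟨τ.1 p, Fin.ext h'⟩
  have hlt : (f (τ.1 p) : ℕ) < f p ↔ (τ.1 p : ℕ) < p := f.lt_iff_lt
  have hfix := snd_letter_ne hτ p.2
  rw [letter_of_lt τ p.2] at hfix
  rw [IsDes, IsExc, ← h, letter_insertFixed_apply, letter_insertFixed_of_notMem hi,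
    letter_of_lt τ p.2, gtLetter]
  simp only [Fin.eta] at hfix ⊢
  lia

lemma not_isDes_insertFixed_of_notMem_of_notMem {i j : Fin n} (hi : i ∉ Set.range f)
    (hj : j ∉ Set.range f) (h : (j : ℕ) = i + 1) : ¬ IsDes (insertFixed f τ) i := by
  rw [IsDes, ← h, letter_insertFixed_of_notMem hi, letter_insertFixed_of_notMem hj, gtLetter]
  lia

lemma isDes_insertFixed (hτ : fixSet τ = ∅) {i : ℕ} (hi : i + 1 < n) :
    IsDes (insertFixed f τ) i ↔ ShuffleDes (IsExc τ) (IsDes τ) (placeSet f) i := by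
  obtain ⟨i, rfl⟩ : ∃ j : Fin n, (j : ℕ) = i := ⟨⟨i, by lia⟩, rfl⟩
  obtain ⟨j, hj⟩ : ∃ j : Fin n, (j : ℕ) = i + 1 := ⟨⟨i + 1, hi⟩, rfl⟩
  simp only [ShuffleDes, ← hj, val_mem_placeSet]
  by_cases hfi : i ∈ Set.range f <;> by_cases hfj : j ∈ Set.range f
  · obtain ⟨p, rfl⟩ := hfi
    obtain ⟨r, rfl⟩ := hfj
    simp [isDes_insertFixed_of_range_of_range hj, count_mem_placeSet]
  · obtain ⟨p, rfl⟩ := hfi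
    simp only [isDes_insertFixed_of_range_of_notMem hfj hj, count_mem_placeSet, hfj]
    simp
  · obtain ⟨p, rfl⟩ := hfj
    have count_eq : Nat.count (· ∈ placeSet f) i = p := by
      rw [← count_mem_placeSet f p, hj, Nat.count_succ, if_neg (by rwa [val_mem_placeSet]),
        add_zero]
    simp only [isDes_insertFixed_of_notMem_of_range hτ hfi hj, count_eq, hfi]
    simp
  · simp only [hfi, hfj, not_isDes_insertFixed_of_notMem_of_notMem hfi hfj hj]
    simp

lemma maj_insertFixed (hτ : fixSet τ = ∅) :
    maj (insertFixed f τ) = majSum (ShuffleDes (IsExc τ) (IsDes τ) (placeSet f)) (n - 1) := by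
  rw [maj_eq_majSum]
  exact majSum_congr fun i hi => isDes_insertFixed hτ (by lia)

lemma maf_insertFixed (hτ : fixSet τ = ∅) :
    maf (insertFixed f τ) = maj τ + invNum (placeSet f) n := by
  have hm : m < n + 1 := by simpa [Nat.lt_succ_iff] using Fintype.card_le_of_embedding f.toEmbedding
  have maf_eq_derEquiv (σ : CP ℓ n) : maf σ = maj (derEquiv ℓ n σ).2.2.1 +
      invNum (placeSet (derEquiv ℓ n σ).2.1) n := maf_eq σ
  rw [maf_eq_derEquiv, show insertFixed f τ = (derEquiv ℓ n).symm ⟨⟨m, hm⟩, f, τ, hτ⟩ from rfl,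
    Equiv.apply_symm_apply]

end Descents

/-! ### Comparison of `fmaf` and `fmaj` -/

section Comparison

variable {R : Type*} [CommSemiring R] (q : R) {ℓ m : ℕ} [NeZero ℓ] {τ : CP ℓ m}

lemma sum_pow_maj_insertFixed (hτ : fixSet τ = ∅) (n : ℕ) :
    ∑ f : Fin m ↪o Fin n, q ^ maj (insertFixed f τ) = q ^ maj τ * qBinom q n m := by
  simp_rw [maj_insertFixed hτ]
  rw [sum_placeSet m n fun S => q ^ majSum (ShuffleDes (IsExc τ) (IsDes τ) S) (n - 1),
    sum_pow_majSum_shuffleDes q (isDes_of_isExc hτ) not_isDes_of_not_isExc, maj_eq_majSum]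

lemma sum_pow_maf_insertFixed (hτ : fixSet τ = ∅) (n : ℕ) :
    ∑ f : Fin m ↪o Fin n, q ^ maf (insertFixed f τ) = q ^ maj τ * qBinom q n m := by
  simp_rw [maf_insertFixed hτ, pow_add, ← mul_sum]
  rw [sum_placeSet m n fun S => q ^ invNum S n, sum_pow_invNum]

theorem sum_pow_fmaf_eq_sum_pow_fmaj (ℓ n : ℕ) [NeZero ℓ] :
    ∑ σ : CP ℓ n, q ^ fmaf σ = ∑ σ : CP ℓ n, q ^ fmaj σ := by
  rw [← (derEquiv ℓ n).symm.sum_comp fun σ => q ^ fmaf σ,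
    ← (derEquiv ℓ n).symm.sum_comp fun σ => q ^ fmaj σ, Fintype.sum_sigma, Fintype.sum_sigma]
  refine sum_congr rfl fun m _ => ?_
  rw [Fintype.sum_prod_type_right, Fintype.sum_prod_type_right]
  refine sum_congr rfl fun τ _ => ?_
  change ∑ f, q ^ fmaf (insertFixed f τ.1) = ∑ f, q ^ fmaj (insertFixed f τ.1)
  simp_rw [fmaf, fmaj, col_insertFixed, pow_add, pow_mul, ← sum_mul]
  rw [sum_pow_maf_insertFixed _ τ.2, sum_pow_maj_insertFixed _ τ.2]

end Comparison

end CP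

theorem fmaf_is_mahonian_general {R : Type*} [CommSemiring R] (q : R) (ℓ n : ℕ) [NeZero ℓ] :
    ∑ σ : CP ℓ n, q ^ CP.fmaf σ = ∏ j ∈ Icc 1 n, qint q (j * ℓ) := by
  rw [CP.sum_pow_fmaf_eq_sum_pow_fmaj, CP.sum_pow_fmaj]

open Polynomial in
/-- `fmaf` is Mahonian on `G_{ℓ,n}`:
`Σ_{σ ∈ G_{ℓ,n}} q^{fmaf σ} = [ℓ]_q [2ℓ]_q ⋯ [nℓ]_q`. -/
theorem fmaf_is_mahonian (ℓ n : ℕ) (hℓ : 1 ≤ ℓ) :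
    (∑ σ : CP ℓ n, (X : Polynomial ℤ) ^ CP.fmaf σ) =
      ∏ j ∈ Icc 1 n, qint (X : Polynomial ℤ) (j * ℓ) := by
  have : NeZero ℓ := ⟨by lia⟩
  exact fmaf_is_mahonian_general X ℓ n
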